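/- For all x > 0, one has (16/21)·ln(x + 1/2) + (5/42)·ln(x² + x + 3/5) < ψ(x+1) < (16/21)·ln(x + 1/2) + (5/42)·ln(x² + x + 3/5) − c₀, where c₀ = γ − (8/21)·ln 4 + (5/42)·ln(3/5) (numerically c₀ ≈ −0.011709). -/

import Mathlib

open Real Filter Set

/-- The digamma function ψ(x) = Γ'(x)/Γ(x), as the derivative of log ∘ Γ. -/
noncomputable def digamma (x : ℝ) : ℝ := deriv (fun y : ℝ => Real.log (Real.Gamma y)) x

/-- L(x,a) = (1/(90a²+2))·ln(x²+x+(3a+1)/3) + (45a²/(90a²+2))·ln(x²+x+(15a−1)/(45a)). -/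
noncomputable def L (x a : ℝ) : ℝ :=
  (1 / (90 * a ^ 2 + 2)) * Real.log (x ^ 2 + x + (3 * a + 1) / 3) +
    (45 * a ^ 2 / (90 * a ^ 2 + 2)) * Real.log (x ^ 2 + x + (15 * a - 1) / (45 * a))

/-! Let `F x = ψ (x + 1) - A x` be the error of the logarithmic approximation `A`. The functional
equation of `ψ` removes the digamma function from `F x - F (x + 1)`, whose derivative is then an
explicit rational function; its numerator collapses to a negative constant, so it is negative for
`x > -1/2`. Since `F` vanishes at infinity, summing these differences along the orbits of
`x ↦ x + 1` shows that `F` itself is strictly decreasing, so `0 < F x < F 0` for `x > 0`; the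
constant `-c₀` is `F 0`. -/

open scoped Topology

section DifferenceMonotonicity

variable {G : Type*} [AddCommGroup G] [LinearOrder G] [IsOrderedAddMonoid G] [Archimedean G]
  {a c : G}

lemma lt_of_tendsto_of_forall_add_lt {α : Type*} [Preorder α] [TopologicalSpace α]
    [OrderClosedTopology α] {f : G → α} {l : α} (hc : 0 < c) (hlim : Tendsto f atTop (𝓝 l))
    (hf : ∀ x, a < x → f (x + c) < f x) {x : G} (hx : a < x) : l < f x := by
  have orbit_step (n : ℕ) : f (x + (n + 1) • c) < f (x + n • c) := by
    rw [succ_nsmul, ← add_assoc]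
    exact hf _ (hx.trans_le (le_add_of_nonneg_right (nsmul_nonneg hc.le n)))
  have orbit_tendsto : Tendsto (fun n : ℕ => f (x + n • c)) atTop (𝓝 l) :=
    hlim.comp (tendsto_atTop_add_const_left _ x (tendsto_id.atTop_nsmul_const hc))
  have limit_le := (antitone_nat_of_succ_le fun n => (orbit_step n).le).le_of_tendsto
    orbit_tendsto 1
  exact limit_le.trans_lt (by simpa using orbit_step 0)

lemma strictAntiOn_of_strictAntiOn_sub_add {H : Type*} [AddCommGroup H] [PartialOrder H]
    [IsOrderedAddMonoid H] [TopologicalSpace H] [OrderClosedTopology H] [ContinuousSub H]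
    {f : G → H} {l : H} (hc : 0 < c) (hlim : Tendsto f atTop (𝓝 l))
    (hf : StrictAntiOn (fun x => f x - f (x + c)) (Ioi a)) : StrictAntiOn f (Ioi a) := by
  intro x hx y _ hxy
  have shift_tendsto : Tendsto (fun z => f z - f (z + (y - x))) atTop (𝓝 0) := by
    simpa using hlim.sub (hlim.comp (tendsto_atTop_add_const_right _ (y - x) tendsto_id))
  have shift_decreases (z : G) (hz : a < z) :
      f (z + c) - f (z + c + (y - x)) < f z - f (z + (y - x)) := by
    have lt_shift : z < z + (y - x) := lt_add_of_pos_right z (sub_pos.mpr hxy)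
    have difference_lt : f (z + (y - x)) - f (z + (y - x) + c) < f z - f (z + c) :=
      hf hz (hz.trans lt_shift) lt_shift
    rw [sub_lt_sub_iff] at difference_lt
    rwa [sub_lt_sub_iff, add_right_comm z c, add_comm (f (z + c))]
  have := lt_of_tendsto_of_forall_add_lt hc shift_tendsto shift_decreases hx
  simpa using this

end DifferenceMonotonicity

lemma differentiableAt_log_Gamma {x : ℝ} (hx : 0 < x) :
    DifferentiableAt ℝ (fun y => log (Gamma y)) x :=
  (differentiableAt_Gamma fun m => ((neg_nonpos.mpr m.cast_nonneg).trans_lt hx).ne').log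
    (Gamma_pos_of_pos hx).ne'

lemma log_Gamma_add_one {x : ℝ} (hx : 0 < x) :
    log (Gamma (x + 1)) = log x + log (Gamma x) := by
  rw [Gamma_add_one hx.ne', log_mul hx.ne' (Gamma_pos_of_pos hx).ne']

lemma digamma_one : digamma 1 = -eulerMascheroniConstant := by
  simpa [digamma] using (hasDerivAt_Gamma_one.log (by simp)).deriv

lemma digamma_add_one {x : ℝ} (hx : 0 < x) : digamma (x + 1) = digamma x + x⁻¹ := by
  have functional_eq : (fun y => log (Gamma (y + 1))) =ᶠ[𝓝 x] fun y => log y + log (Gamma y) := by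
    filter_upwards [lt_mem_nhds hx] with y hy using log_Gamma_add_one hy
  rw [digamma, ← deriv_comp_add_const, functional_eq.deriv_eq,
    deriv_fun_add (differentiableAt_log hx.ne') (differentiableAt_log_Gamma hx), deriv_log,
    add_comm, digamma]

lemma slope_log_Gamma_add_one {x : ℝ} (hx : 0 < x) : slope (log ∘ Gamma) x (x + 1) = log x := by
  simp [slope_def_field, log_Gamma_add_one hx]

lemma digamma_le_log {x : ℝ} (hx : 0 < x) : digamma x ≤ log x := by
  rw [← slope_log_Gamma_add_one hx]
  exact convexOn_log_Gamma.deriv_le_slope hx (add_pos hx one_pos) (lt_add_one x)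
    (differentiableAt_log_Gamma hx)

lemma log_le_digamma_add_one {x : ℝ} (hx : 0 < x) : log x ≤ digamma (x + 1) := by
  rw [← slope_log_Gamma_add_one hx]
  exact convexOn_log_Gamma.slope_le_deriv hx (add_pos hx one_pos) (lt_add_one x)
    (differentiableAt_log_Gamma (add_pos hx one_pos))

lemma tendsto_digamma_sub_log : Tendsto (fun x => digamma x - log x) atTop (𝓝 0) := by
  refine tendsto_of_tendsto_of_tendsto_of_le_of_le'
    (by simpa using (tendsto_inv_atTop_zero (𝕜 := ℝ)).neg) tendsto_const_nhds ?_ ?_ <;>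
    filter_upwards [eventually_gt_atTop 0] with x hx
  · linarith [log_le_digamma_add_one hx, digamma_add_one hx]
  · linarith [digamma_le_log hx]

lemma tendsto_log_quadratic_sub_two_mul_log (b c : ℝ) :
    Tendsto (fun x => log (x ^ 2 + b * x + c) - 2 * log x) atTop (𝓝 0) := by
  have factor_tendsto : Tendsto (fun x : ℝ => 1 + b * x⁻¹ + c * x⁻¹ ^ 2) atTop (𝓝 1) := by
    simpa using ((tendsto_inv_atTop_zero.const_mul b).const_add 1).add
      ((tendsto_inv_atTop_zero.pow 2).const_mul c)
  have log_factor_tendsto := factor_tendsto.log one_ne_zero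
  rw [log_one] at log_factor_tendsto
  refine log_factor_tendsto.congr' ?_
  filter_upwards [eventually_gt_atTop 0, factor_tendsto.eventually_ne one_ne_zero] with x hx hfactor
  have factorization : x ^ 2 + b * x + c = x ^ 2 * (1 + b * x⁻¹ + c * x⁻¹ ^ 2) := by field_simp
  rw [factorization, log_mul (pow_ne_zero 2 hx.ne') hfactor, log_pow]
  push_cast
  ring

/-- The logarithmic approximation of `ψ (x + 1)`. For `x > -1/2` it is `L x (-1/12)`, whose first
quadratic is the square `(x + 1/2) ^ 2`. -/
noncomputable def digammaApprox (x : ℝ) : ℝ :=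
  (16 / 21) * log (x + 1 / 2) + (5 / 42) * log (x ^ 2 + x + 3 / 5)

/-- The error of the approximation of `ψ (x + 1)` by `digammaApprox x`. -/
noncomputable def digammaError (x : ℝ) : ℝ := digamma (x + 1) - digammaApprox x

lemma tendsto_digammaApprox_sub_log : Tendsto (fun x => digammaApprox x - log x) atTop (𝓝 0) := by
  have linear_part := (tendsto_log_comp_add_sub_log (1 / 2)).const_mul (16 / 21)
  have quadratic_part := (tendsto_log_quadratic_sub_two_mul_log 1 (3 / 5)).const_mul (5 / 42)
  have sum_tendsto := linear_part.add quadratic_part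
  simp only [mul_zero, add_zero] at sum_tendsto
  refine sum_tendsto.congr fun x => ?_
  rw [digammaApprox, one_mul]
  ring

lemma tendsto_digammaError : Tendsto digammaError atTop (𝓝 0) := by
  have shifted := tendsto_digamma_sub_log.comp (tendsto_atTop_add_const_right atTop 1 tendsto_id)
  have := (shifted.add (tendsto_log_comp_add_sub_log 1)).sub tendsto_digammaApprox_sub_log
  change Tendsto (fun x => digammaError x) atTop (𝓝 0)
  simpa [digammaError, Function.comp_def] using this

lemma digammaError_sub_add_one {x : ℝ} (hx : -1 < x) :
    digammaError x - digammaError (x + 1) =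
      digammaApprox (x + 1) - digammaApprox x - (x + 1)⁻¹ := by
  rw [digammaError, digammaError, digamma_add_one (x := x + 1) (by linarith)]
  ring

lemma sq_add_self_add_pos {c : ℝ} (hc : 1 / 4 < c) (x : ℝ) : 0 < x ^ 2 + x + c := by
  linarith [sq_nonneg (x + 1 / 2), add_sq x (1 / 2)]

lemma hasDerivAt_digammaApprox {x : ℝ} (hx : -(1 / 2) < x) :
    HasDerivAt digammaApprox
      ((x ^ 2 + x + 31 / 60) / ((x + 1 / 2) * (x ^ 2 + x + 3 / 5))) x := by
  have linear_ne : x + 1 / 2 ≠ 0 := by linarith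
  have quadratic_ne : x ^ 2 + x + 3 / 5 ≠ 0 := (sq_add_self_add_pos (by norm_num) x).ne'
  have linear_deriv : HasDerivAt (fun y : ℝ => y + 1 / 2) 1 x := (hasDerivAt_id x).add_const _
  have quadratic_deriv : HasDerivAt (fun y : ℝ => y ^ 2 + y + 3 / 5) (2 * x + 1) x := by
    simpa using ((hasDerivAt_pow 2 x).add (hasDerivAt_id x)).add_const (3 / 5)
  refine (((linear_deriv.log linear_ne).const_mul (16 / 21)).add
    ((quadratic_deriv.log quadratic_ne).const_mul (5 / 42))).congr_deriv ?_
  -- Atomic denominators keep `field_simp` from clearing the fractions inside them.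
  generalize hp : x + 1 / 2 = p at *
  generalize hq : x ^ 2 + x + 3 / 5 = q at *
  field_simp
  subst hp hq
  ring

lemma hasDerivAt_digammaError_sub_add_one {x : ℝ} (hx : -(1 / 2) < x) :
    HasDerivAt (fun y => digammaError y - digammaError (y + 1))
      (-(9 / 100) / (((x + 1 + 1 / 2) * ((x + 1) ^ 2 + (x + 1) + 3 / 5)) *
        ((x + 1 / 2) * (x ^ 2 + x + 3 / 5)) * (x + 1) ^ 2)) x := by
  have ne₀ : x + 1 / 2 ≠ 0 := by linarith
  have ne₁ : x + 1 ≠ 0 := by linarith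
  have ne₂ : x + 1 + 1 / 2 ≠ 0 := by linarith
  have quadratic_ne (y : ℝ) : y ^ 2 + y + 3 / 5 ≠ 0 := (sq_add_self_add_pos (by norm_num) y).ne'
  have shifted_deriv :=
    (hasDerivAt_digammaApprox (x := x + 1) (by linarith)).comp_add_const x 1
  have approx_deriv := shifted_deriv.sub (hasDerivAt_digammaApprox hx)
  have inv_deriv := (hasDerivAt_inv ne₁).comp_add_const x 1
  refine ((approx_deriv.sub inv_deriv).congr_of_eventuallyEq ?_).congr_deriv ?_
  · filter_upwards [lt_mem_nhds hx] with y hy using digammaError_sub_add_one (by linarith)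
  · have denom_ne₀ := mul_ne_zero ne₀ (quadratic_ne x)
    have denom_ne₁ := mul_ne_zero ne₂ (quadratic_ne (x + 1))
    have sq_ne := pow_ne_zero 2 ne₁
    have denom_ne := mul_ne_zero (mul_ne_zero denom_ne₁ denom_ne₀) sq_ne
    rw [sub_neg_eq_add, inv_eq_one_div, div_sub_div _ _ denom_ne₁ denom_ne₀,
      div_add_div _ _ (mul_ne_zero denom_ne₁ denom_ne₀) sq_ne, div_left_inj' denom_ne]
    ring

lemma strictAntiOn_digammaError_sub_add_one :
    StrictAntiOn (fun x => digammaError x - digammaError (x + 1)) (Ioi (-(1 / 2))) := by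
  refine strictAntiOn_of_deriv_neg (convex_Ioi _)
    (fun x hx => (hasDerivAt_digammaError_sub_add_one hx).continuousAt.continuousWithinAt) ?_
  rw [interior_Ioi]
  intro x (hx : -(1 / 2) < x)
  rw [(hasDerivAt_digammaError_sub_add_one hx).deriv]
  have pos₀ : 0 < x + 1 / 2 := by linarith
  have pos₁ : 0 < x + 1 := by linarith
  have quadratic_pos : 0 < x ^ 2 + x + 3 / 5 := sq_add_self_add_pos (by norm_num) x
  exact div_neg_of_neg_of_pos (by norm_num) (by positivity)

lemma strictAntiOn_digammaError : StrictAntiOn digammaError (Ioi (-(1 / 2))) :=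
  strictAntiOn_of_strictAntiOn_sub_add one_pos tendsto_digammaError
    strictAntiOn_digammaError_sub_add_one

lemma digammaError_pos {x : ℝ} (hx : -(1 / 2) < x) : 0 < digammaError x :=
  lt_of_tendsto_of_forall_add_lt one_pos tendsto_digammaError
    (fun y hy => strictAntiOn_digammaError hy (hy.trans (lt_add_one y)) (lt_add_one y)) hx

lemma digammaError_zero :
    digammaError 0 =
      -(eulerMascheroniConstant - (8 / 21) * log 4 + (5 / 42) * log (3 / 5)) := by
  have log_four : log 4 = 2 * log 2 := by
    rw [show (4 : ℝ) = 2 ^ 2 by norm_num, log_pow, Nat.cast_ofNat]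
  simp only [digammaError, digammaApprox, zero_add, ne_eq, OfNat.ofNat_ne_zero, not_false_eq_true,
    zero_pow, digamma_one, one_div, log_inv, log_four]
  ring

/-- For x > 0, (16/21)ln(x+1/2) + (5/42)ln(x²+x+3/5) < ψ(x+1)
< (16/21)ln(x+1/2) + (5/42)ln(x²+x+3/5) − c₀, with c₀ = γ − (8/21)ln 4 + (5/42)ln(3/5). -/
theorem stmt_16 (x : ℝ) (hx : 0 < x) :
    (16 / 21) * Real.log (x + 1 / 2) + (5 / 42) * Real.log (x ^ 2 + x + 3 / 5) <
      digamma (x + 1) ∧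
    digamma (x + 1) <
      (16 / 21) * Real.log (x + 1 / 2) + (5 / 42) * Real.log (x ^ 2 + x + 3 / 5) -
        (Real.eulerMascheroniConstant - (8 / 21) * Real.log 4 + (5 / 42) * Real.log (3 / 5)) := by
  have error_pos : 0 < digammaError x := digammaError_pos (by linarith)
  have error_lt : digammaError x < digammaError 0 :=
    strictAntiOn_digammaError (by simp) (mem_Ioi.mpr (by linarith)) hx
  rw [digammaError_zero] at error_lt
  rw [digammaError, digammaApprox] at error_pos error_lt
  constructor <;> linarith
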